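/- arXiv:2503.19181 — 2 statements merged into one kernel-verified Lean document; each statement's English description precedes it below -/
import Mathlib

section
/- Let G be a finite connected simple graph with a designated vertex v₀, let F be a finite set of distinct nonzero vectors in (Fin m → ZMod 2), let D(F) be the decision graph of F, and let b ∈ (Fin m → ZMod 2). Then the assignment φ ↦ τ_φ, where τ_φ(𝟙_u + 𝟙_v) = φ(u) + φ(v), is a bijection from the set of graph homomorphisms φ : G → D(F) with φ(v₀) = b onto the set of all matroid homomorphisms from the graphic matroid M(G) to the binary matroid with point set F. -/
/-- A circuit of a binary matroid with point set `E`: a minimal nonempty subset summing to 0. -/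
def IsCircuit {P : Type*} [AddCommGroup P] (E Z : Finset P) : Prop :=
  Z ⊆ E ∧ Z.Nonempty ∧ ∑ e ∈ Z, e = 0 ∧
    ∀ Z' ⊆ Z, Z'.Nonempty → ∑ e ∈ Z', e = 0 → Z' = Z

/-- A cocircuit: a minimal nonempty subset meeting every circuit evenly. -/
def IsCocircuit {P : Type*} [AddCommGroup P] [DecidableEq P] (E C : Finset P) : Prop :=
  C ⊆ E ∧ C.Nonempty ∧ (∀ Z, IsCircuit E Z → Even (C ∩ Z).card) ∧
    ∀ C' ⊆ C, C'.Nonempty → (∀ Z, IsCircuit E Z → Even (C' ∩ Z).card) → C' = C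

/-- A matroid homomorphism from the matroid on `E` to the matroid on `F`. -/
def IsMHom {P Q : Type*} [AddCommGroup P] [AddCommGroup Q]
    (E : Finset P) (F : Finset Q) (τ : P → Q) : Prop :=
  (∀ e ∈ E, τ e ∈ F) ∧ ∀ Z, IsCircuit E Z → ∑ e ∈ Z, τ e = 0

/-- Adjacency in the recolouring graph: the maps differ exactly on a cocircuit. -/
def MAdj {P Q : Type*} [AddCommGroup P] [AddCommGroup Q] [DecidableEq P]
    (E : Finset P) (τ τ' : P → Q) : Prop :=
  ∃ C, IsCocircuit E C ∧ ∀ e ∈ E, (τ e ≠ τ' e ↔ e ∈ C)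

/-- One step of a walk in `mCol(E,F)`: both maps are homomorphisms and they are
equal (as maps on `E`) or adjacent. -/
def MStep {P Q : Type*} [AddCommGroup P] [AddCommGroup Q] [DecidableEq P]
    (E : Finset P) (F : Finset Q) (τ τ' : P → Q) : Prop :=
  IsMHom E F τ ∧ IsMHom E F τ' ∧ ((∀ e ∈ E, τ e = τ' e) ∨ MAdj E τ τ')

/-- Joined by a walk in the recolouring graph `mCol(E,F)`. -/
def MWalk {P Q : Type*} [AddCommGroup P] [AddCommGroup Q] [DecidableEq P]
    (E : Finset P) (F : Finset Q) : (P → Q) → (P → Q) → Prop :=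
  Relation.ReflTransGen (MStep E F)

/-- The indicator vector of a vertex. -/
def ind {V : Type*} [DecidableEq V] (u : V) : V → ZMod 2 := Pi.single u 1

/-- The decision graph of a set `F` of nonzero vectors. -/
def decisionGraph {m : ℕ} (F : Finset (Fin m → ZMod 2)) : SimpleGraph (Fin m → ZMod 2) where
  Adj v w := v + w ∈ F ∧ v ≠ w
  symm := by
    constructor
    intro v w h
    exact ⟨by rw [add_comm]; exact h.1, h.2.symm⟩
  loopless := by
    constructor
    intro v h
    exact h.2 rfl

/-- The weight of a vector: its number of nonzero coordinates. -/
def wt {n : ℕ} (e : Fin n → ZMod 2) : ℕ := (Finset.univ.filter fun i => e i ≠ 0).card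

/-!
A matroid homomorphism on a binary point set `E` kills every cycle, because a cycle is a disjoint
union of circuits. Since the linear relations over `ZMod 2` among the points of `E` are exactly
its cycles, the matroid homomorphisms are the restrictions to `E` of linear maps `L`. On the
graphic matroid, `L` is read off at the vertices: `u ↦ L 𝟙_u` induces `L`, and in characteristic two
it still does after translation by a constant, which is chosen to give `v₀` the value `b`. Going
along walks from `v₀`, the values on the edges determine those at the vertices.
-/

section LinearExtension

variable {K ι P Q : Type*} [DivisionRing K] [AddCommGroup P] [Module K P] [AddCommGroup Q]
  [Module K Q]

theorem exists_linearMap_comp_eq_of_ker_le_ker {A : Type*} [AddCommGroup A] [Module K A]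
    (f : A →ₗ[K] P) (g : A →ₗ[K] Q) (hfg : LinearMap.ker f ≤ LinearMap.ker g) :
    ∃ L : P →ₗ[K] Q, L ∘ₗ f = g := by
  obtain ⟨L, hL⟩ := LinearMap.exists_extend
    ((LinearMap.ker f).liftQ g hfg ∘ₗ f.quotKerEquivRange.symm.toLinearMap)
  refine ⟨L, LinearMap.ext fun a => ?_⟩
  have hLa := LinearMap.congr_fun hL ⟨f a, f.mem_range_self a⟩
  simpa [LinearMap.quotKerEquivRange_symm_apply_image] using hLa

theorem exists_linearMap_apply_eq (v : ι → P) (w : ι → Q)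
    (hvw : ∀ c : ι →₀ K,
      Finsupp.linearCombination K v c = 0 → Finsupp.linearCombination K w c = 0) :
    ∃ L : P →ₗ[K] Q, ∀ i, L (v i) = w i := by
  obtain ⟨L, hL⟩ := exists_linearMap_comp_eq_of_ker_le_ker _ _ hvw
  refine ⟨L, fun i => ?_⟩
  simpa using LinearMap.congr_fun hL (Finsupp.single i 1)

theorem exists_linearMap_apply_eq_of_linearIndependent {v : ι → P} (hv : LinearIndependent K v)
    (w : ι → Q) : ∃ L : P →ₗ[K] Q, ∀ i, L (v i) = w i :=
  exists_linearMap_apply_eq v w fun c hc => by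
    rw [linearIndependent_iff.mp hv c hc, map_zero]

end LinearExtension

theorem linearCombination_zmod_two_eq_sum_support {ι Q : Type*} [AddCommGroup Q]
    [Module (ZMod 2) Q] (w : ι → Q) (c : ι →₀ ZMod 2) :
    Finsupp.linearCombination (ZMod 2) w c = ∑ i ∈ c.support, w i := by
  refine Finset.sum_congr rfl fun i hi => ?_
  have hci : c i = 1 := Fin.eq_one_of_ne_zero _ (Finsupp.mem_support_iff.mp hi)
  simp [hci]

section Circuits

variable {P Q : Type*} [AddCommGroup P] [AddCommGroup Q] {E : Finset P}

theorem exists_isCircuit_subset {Z : Finset P} (hZE : Z ⊆ E) (hZ : Z.Nonempty)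
    (hsum : ∑ e ∈ Z, e = 0) : ∃ C ⊆ Z, IsCircuit E C := by
  obtain ⟨C, hCZ, ⟨hC, hCsum⟩, hmin⟩ := exists_minimal_le_of_wellFoundedLT
    (fun C : Finset P => C.Nonempty ∧ ∑ e ∈ C, e = 0) Z ⟨hZ, hsum⟩
  exact ⟨C, hCZ, hCZ.trans hZE, hC, hCsum, fun C' hC' hne h0 =>
    hC'.antisymm (hmin ⟨hne, h0⟩ hC')⟩

theorem sum_eq_zero_of_forall_isCircuit {τ : P → Q}
    (hτ : ∀ C, IsCircuit E C → ∑ e ∈ C, τ e = 0) {Z : Finset P} (hZE : Z ⊆ E)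
    (hsum : ∑ e ∈ Z, e = 0) : ∑ e ∈ Z, τ e = 0 := by
  classical
  induction Z using Finset.strongInduction with
  | H Z ih =>
    rcases Z.eq_empty_or_nonempty with rfl | hZ
    · exact Finset.sum_empty
    obtain ⟨C, hCZ, hC⟩ := exists_isCircuit_subset hZE hZ hsum
    have hdiff : ∑ e ∈ Z \ C, e = 0 := by
      rwa [← Finset.sum_sdiff hCZ, hC.2.2.1, add_zero] at hsum
    rw [← Finset.sum_sdiff hCZ, hτ C hC, add_zero]
    exact ih _ (Finset.sdiff_ssubset hCZ hC.2.1) (Finset.sdiff_subset.trans hZE) hdiff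

theorem isMHom_of_addMonoidHom {F : Finset Q} (L : P →+ Q) (hL : ∀ e ∈ E, L e ∈ F) :
    IsMHom E F L :=
  ⟨hL, fun Z hZ => by rw [← map_sum, hZ.2.2.1, map_zero]⟩

theorem exists_linearMap_eqOn_of_forall_isCircuit [Module (ZMod 2) P] [Module (ZMod 2) Q]
    {τ : P → Q} (hτ : ∀ C, IsCircuit E C → ∑ e ∈ C, τ e = 0) :
    ∃ L : P →ₗ[ZMod 2] Q, Set.EqOn L τ E := by
  suffices ∃ L : P →ₗ[ZMod 2] Q, ∀ e : E, L e = τ e from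
    this.imp fun L hL e he => hL ⟨e, he⟩
  refine exists_linearMap_apply_eq _ _ fun c hc => ?_
  let Z : Finset P := c.support.map (Function.Embedding.subtype _)
  have hZE : Z ⊆ E := Finset.map_subtype_subset c.support
  rw [linearCombination_zmod_two_eq_sum_support] at hc ⊢
  simpa [Z] using sum_eq_zero_of_forall_isCircuit hτ hZE (by simpa [Z] using hc)

end Circuits

theorem circulantGraph_adj_iff_add_mem {Q : Type*} [AddCommGroup Q] [Module (ZMod 2) Q]
    {s : Set Q} {x y : Q} : (SimpleGraph.circulantGraph s).Adj x y ↔ x + y ∈ s ∧ x ≠ y := by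
  simp [ZModModule.sub_eq_add, add_comm y x, and_comm]

theorem decisionGraph_eq_circulantGraph {m : ℕ} (F : Finset (Fin m → ZMod 2)) :
    decisionGraph F = SimpleGraph.circulantGraph (F : Set (Fin m → ZMod 2)) := by
  ext x y
  exact circulantGraph_adj_iff_add_mem.symm

theorem eq_of_forall_adj_add_eq_add {V A : Type*} [Add A] [IsLeftCancelAdd A]
    {G : SimpleGraph V} (hG : G.Preconnected) {φ ψ : V → A} {v₀ : V} (hv₀ : φ v₀ = ψ v₀)
    (hadj : ∀ u v, G.Adj u v → φ u + φ v = ψ u + ψ v) : φ = ψ := by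
  funext u
  obtain ⟨p⟩ := hG v₀ u
  induction p with
  | nil => exact hv₀
  | cons huv _ ih =>
    exact ih (add_left_cancel ((hadj _ _ huv).trans (congrArg (· + _) hv₀.symm)))

section GraphicMatroid

variable {V Q : Type*} [DecidableEq V] [AddCommGroup Q]
  {G : SimpleGraph V} {E : Finset (V → ZMod 2)} {F : Finset Q}

/-- The vertex labelling `φ` induces `τ` on the points of the graphic matroid of `G`, that is,
`τ` agrees there with `τ_φ`. The values of `τ` at the other
vectors of `V → ZMod 2` are irrelevant, as they are for `IsMHom`. -/
def Induces (G : SimpleGraph V) (φ : V → Q) (τ : (V → ZMod 2) → Q) : Prop :=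
  ∀ u v, G.Adj u v → τ (ind u + ind v) = φ u + φ v

theorem linearIndependent_ind : LinearIndependent (ZMod 2) (ind : V → V → ZMod 2) :=
  Pi.linearIndependent_single_one V (ZMod 2)

theorem exists_isMHom_induces [Module (ZMod 2) Q]
    (hE : ∀ x ∈ E, ∃ u v, G.Adj u v ∧ x = ind u + ind v)
    {φ : V → Q} (hφ : ∀ u v, G.Adj u v → φ u + φ v ∈ F) :
    ∃ τ : (V → ZMod 2) → Q, Induces G φ τ ∧ IsMHom E F τ := by
  obtain ⟨L, hL⟩ := exists_linearMap_apply_eq_of_linearIndependent linearIndependent_ind φ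
  have hind : Induces G φ L := fun u v _ => by rw [map_add, hL, hL]
  refine ⟨L, hind, isMHom_of_addMonoidHom L.toAddMonoidHom fun e he => ?_⟩
  obtain ⟨u, v, huv, rfl⟩ := hE e he
  exact (hind u v huv).symm ▸ hφ u v huv

theorem exists_induces_apply_eq [Module (ZMod 2) Q]
    (hE : ∀ u v, G.Adj u v → ind u + ind v ∈ E) {τ : (V → ZMod 2) → Q}
    (hτ : ∀ C, IsCircuit E C → ∑ e ∈ C, τ e = 0) (v₀ : V) (b : Q) :
    ∃ φ : V → Q, φ v₀ = b ∧ Induces G φ τ := by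
  obtain ⟨L, hL⟩ := exists_linearMap_eqOn_of_forall_isCircuit hτ
  refine ⟨fun u => L (ind u) + (L (ind v₀) + b), ?_, fun u v huv => ?_⟩
  · simp only [← add_assoc, ZModModule.add_self, zero_add]
  · rw [← hL (hE u v huv), map_add, add_add_add_comm, ZModModule.add_self, add_zero]

theorem Induces.eq (hG : G.Preconnected) {φ ψ : V → Q} {τ : (V → ZMod 2) → Q}
    (hφ : Induces G φ τ) (hψ : Induces G ψ τ) {v₀ : V} (hv₀ : φ v₀ = ψ v₀) : φ = ψ :=
  eq_of_forall_adj_add_eq_add hG hv₀ fun u v huv => (hφ u v huv).symm.trans (hψ u v huv)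

theorem Induces.circulantGraph_adj [Module (ZMod 2) Q] {φ : V → Q} {τ : (V → ZMod 2) → Q}
    (hφ : Induces G φ τ) (hF : (0 : Q) ∉ F) {u v : V} (huv : G.Adj u v)
    (hτ : τ (ind u + ind v) ∈ F) :
    (SimpleGraph.circulantGraph (F : Set Q)).Adj (φ u) (φ v) := by
  rw [hφ u v huv] at hτ
  refine circulantGraph_adj_iff_add_mem.mpr ⟨hτ, fun heq => hF ?_⟩
  rwa [heq, ZModModule.add_self] at hτ

theorem stmt12_general [Module (ZMod 2) Q] (hG : G.Preconnected) (v₀ : V) (hF : (0 : Q) ∉ F)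
    (b : Q) (hE : ∀ x, x ∈ E ↔ ∃ u v, G.Adj u v ∧ x = ind u + ind v) :
    (∀ φ : G →g SimpleGraph.circulantGraph (F : Set Q), φ v₀ = b →
      ∃ τ : (V → ZMod 2) → Q, Induces G φ τ ∧ IsMHom E F τ) ∧
    (∀ τ : (V → ZMod 2) → Q, IsMHom E F τ →
      ∃! φ : {φ : G →g SimpleGraph.circulantGraph (F : Set Q) // φ v₀ = b},
        Induces G φ.1 τ) := by
  have hedge : ∀ u v, G.Adj u v → ind u + ind v ∈ E := fun u v huv => (hE _).mpr ⟨u, v, huv, rfl⟩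
  constructor
  · intro φ _
    exact exists_isMHom_induces (fun x => (hE x).mp) fun u v huv =>
      (circulantGraph_adj_iff_add_mem.mp (φ.map_adj huv)).1
  · intro τ hτ
    obtain ⟨φ, hφb, hφτ⟩ := exists_induces_apply_eq hedge hτ.2 v₀ b
    have hφadj : ∀ {u v}, G.Adj u v →
        (SimpleGraph.circulantGraph (F : Set Q)).Adj (φ u) (φ v) := fun huv =>
      hφτ.circulantGraph_adj hF huv (hτ.1 _ (hedge _ _ huv))
    refine ⟨⟨⟨φ, hφadj⟩, hφb⟩, hφτ, fun ψ hψτ => ?_⟩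
    exact Subtype.ext (DFunLike.coe_injective (hψτ.eq hG hφτ (ψ.2.trans hφb.symm)))

end GraphicMatroid

theorem stmt12 {V : Type*} [Fintype V] [DecidableEq V] (m : ℕ)
    (G : SimpleGraph V) (hG : G.Connected) (v₀ : V)
    (F : Finset (Fin m → ZMod 2)) (hF : ∀ f ∈ F, f ≠ 0)
    (b : Fin m → ZMod 2)
    (EG : Finset (V → ZMod 2))
    (hEG : ∀ x, x ∈ EG ↔ ∃ u v, G.Adj u v ∧ x = ind u + ind v) :
    (∀ φ : G →g decisionGraph F, φ v₀ = b →
      ∃ τ : (V → ZMod 2) → (Fin m → ZMod 2),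
        (∀ u v, G.Adj u v → τ (ind u + ind v) = φ u + φ v) ∧ IsMHom EG F τ) ∧
    (∀ τ : (V → ZMod 2) → (Fin m → ZMod 2), IsMHom EG F τ →
      ∃! φ : {φ : G →g decisionGraph F // φ v₀ = b},
        ∀ u v, G.Adj u v → τ (ind u + ind v) = φ.1 u + φ.1 v) := by
  rw [decisionGraph_eq_circulantGraph]
  exact stmt12_general hG.preconnected v₀ (fun h0 => hF 0 h0 rfl) b hEG
end

section
/- Let G be a finite simple graph, let F be a finite set of distinct nonzero vectors in (Fin m → ZMod 2), and let φ, ψ : G → D(F) be graph homomorphisms that are Kempe-adjacent: there are vectors b, b' and a connected component with vertex set U of the subgraph of G induced on {u : φ(u) = b' or φ(u) = b' + b} such that ψ(u) = φ(u) + b for u ∈ U and ψ(u) = φ(u) otherwise. Then the matroid homomorphisms τ_φ and τ_ψ (where τ_φ(𝟙_u + 𝟙_v) = φ(u) + φ(v)) are joined by a walk in the recolouring graph mCol(E_G, F). -/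
/-- Kempe adjacency of two homomorphisms to a decision graph:
`ψ` is obtained from `φ` by adding `b` on the vertex set `U` of a connected
component of the subgraph induced on the vertices coloured `b'` or `b' + b`. -/
def KempeAdj {V : Type*} {m : ℕ} {G : SimpleGraph V} {F : Finset (Fin m → ZMod 2)}
    (φ ψ : G →g decisionGraph F) : Prop :=
  ∃ (b b' : Fin m → ZMod 2) (U : Set V),
    (∃ c : (G.induce {u | φ u = b' ∨ φ u = b' + b}).ConnectedComponent,
      U = Subtype.val '' {x | (G.induce {u | φ u = b' ∨ φ u = b' + b}).connectedComponentMk x = c}) ∧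
    (∀ u ∈ U, ψ u = φ u + b) ∧ (∀ u ∉ U, ψ u = φ u)

/-!
Passing from `φ` to `ψ` changes the edge label `φ u + φ v` by `0` or by `b`. Both label maps have
zero sum on every circuit and `b` has order two, so the set of edges whose label changes meets every
circuit evenly. Such a set contains a cocircuit, and removing the cocircuit leaves a set of the same
kind. Adding `b` on one cocircuit after the other is the required walk: each intermediate map takes,
edge by edge, a value of one of the two label maps, hence a value in `F`.
-/

section Cocycle

variable {P : Type*} [AddCommGroup P] [DecidableEq P] {E C : Finset P}

/-- A cocycle of the binary matroid on `E`: a subset of `E` meeting every circuit evenly. The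
cocircuits are the minimal nonempty cocycles. -/
def IsCocycle (E C : Finset P) : Prop :=
  C ⊆ E ∧ ∀ Z, IsCircuit E Z → Even (C ∩ Z).card

theorem isCocircuit_iff_minimal :
    IsCocircuit E C ↔ Minimal (fun D ↦ IsCocycle E D ∧ D.Nonempty) C := by
  constructor
  · rintro ⟨hCE, hC, heven, hmin⟩
    exact ⟨⟨⟨hCE, heven⟩, hC⟩, fun D hD hDC ↦ (hmin D hDC hD.2 hD.1.2).ge⟩
  · rintro ⟨⟨⟨hCE, heven⟩, hC⟩, hmin⟩
    exact ⟨hCE, hC, heven, fun D hDC hD hDeven ↦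
      hDC.antisymm (hmin ⟨⟨hDC.trans hCE, hDeven⟩, hD⟩ hDC)⟩

theorem IsCocircuit.isCocycle (hC : IsCocircuit E C) : IsCocycle E C :=
  ⟨hC.1, hC.2.2.1⟩

theorem IsCocircuit.nonempty (hC : IsCocircuit E C) : C.Nonempty :=
  hC.2.1

theorem IsCocycle.exists_isCocircuit_subset (hC : IsCocycle E C) (hne : C.Nonempty) :
    ∃ D ⊆ C, IsCocircuit E D := by
  obtain ⟨D, hDC, hD⟩ := exists_minimal_le_of_wellFoundedLT
    (fun D ↦ IsCocycle E D ∧ D.Nonempty) C ⟨hC, hne⟩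
  exact ⟨D, hDC, isCocircuit_iff_minimal.2 hD⟩

end Cocycle

section ShiftOn

variable {P Q : Type*} [DecidableEq P] [AddCommGroup Q] {τ : P → Q} {b : Q} {C D : Finset P} {e : P}

/-- The map obtained from `τ` by adding `b` to its values on `D`; for a cocircuit `D` this is one
recolouring step. -/
def shiftOn (τ : P → Q) (b : Q) (D : Finset P) : P → Q :=
  fun e ↦ if e ∈ D then τ e + b else τ e

theorem shiftOn_of_mem (he : e ∈ D) : shiftOn τ b D e = τ e + b :=
  if_pos he

theorem shiftOn_of_notMem (he : e ∉ D) : shiftOn τ b D e = τ e :=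
  if_neg he

theorem shiftOn_empty : shiftOn τ b ∅ = τ :=
  funext fun e ↦ shiftOn_of_notMem (Finset.notMem_empty e)

theorem shiftOn_shiftOn_sdiff (hCD : C ⊆ D) :
    shiftOn (shiftOn τ b C) b (D \ C) = shiftOn τ b D := by
  funext e
  by_cases heC : e ∈ C
  · simp [shiftOn, heC, hCD heC]
  · simp [shiftOn, heC]

theorem sum_shiftOn (Z : Finset P) :
    ∑ e ∈ Z, shiftOn τ b D e = ∑ e ∈ Z, τ e + (D ∩ Z).card • b := by
  calc ∑ e ∈ Z, shiftOn τ b D e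
      = ∑ e ∈ Z, (τ e + if e ∈ D then b else 0) :=
        Finset.sum_congr rfl fun e _ ↦ by unfold shiftOn; split_ifs <;> simp
    _ = ∑ e ∈ Z, τ e + (D ∩ Z).card • b := by
        rw [Finset.sum_add_distrib, ← Finset.sum_filter, Finset.sum_const,
          Finset.filter_mem_eq_inter, Finset.inter_comm]

end ShiftOn

section Recolouring

variable {P Q : Type*} [AddCommGroup P] [AddCommGroup Q] {E : Finset P} {F : Finset Q}
  {τ τ' : P → Q} {b : Q}

theorem IsMHom.congr (hτ : IsMHom E F τ) (h : ∀ e ∈ E, τ' e = τ e) : IsMHom E F τ' :=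
  ⟨fun e he ↦ h e he ▸ hτ.1 e he, fun Z hZ ↦
    (Finset.sum_congr rfl fun e he ↦ h e (hZ.1 he)).trans (hτ.2 Z hZ)⟩

theorem isMHom_addMonoidHom (f : P →+ Q) (hf : ∀ e ∈ E, f e ∈ F) : IsMHom E F f :=
  ⟨hf, fun Z hZ ↦ by rw [← map_sum, hZ.2.2.1, map_zero]⟩

variable [DecidableEq P] {C D : Finset P}

theorem IsMHom.isCocycle_of_shiftOn (hb : addOrderOf b = 2) (hDE : D ⊆ E) (hτ : IsMHom E F τ)
    (hσ : IsMHom E F (shiftOn τ b D)) : IsCocycle E D := by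
  refine ⟨hDE, fun Z hZ ↦ ?_⟩
  have hsum := sum_shiftOn (τ := τ) (b := b) (D := D) Z
  rw [hσ.2 Z hZ, hτ.2 Z hZ, zero_add] at hsum
  rw [even_iff_two_dvd, ← hb]
  exact addOrderOf_dvd_of_nsmul_eq_zero hsum.symm

theorem IsMHom.shiftOn_of_isCocycle (hb : 2 • b = 0) (hτ : IsMHom E F τ) (hD : IsCocycle E D)
    (hF : ∀ e ∈ D, τ e + b ∈ F) : IsMHom E F (shiftOn τ b D) := by
  refine ⟨fun e he ↦ ?_, fun Z hZ ↦ ?_⟩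
  · by_cases heD : e ∈ D
    · exact shiftOn_of_mem (τ := τ) heD ▸ hF e heD
    · exact shiftOn_of_notMem (τ := τ) heD ▸ hτ.1 e he
  · obtain ⟨k, hk⟩ := (hD.2 Z hZ).two_dvd
    rw [sum_shiftOn, hτ.2 Z hZ, zero_add, hk, mul_comm, mul_nsmul', hb, nsmul_zero]

theorem IsCocircuit.mAdj_shiftOn (hC : IsCocircuit E C) (hb : b ≠ 0) :
    MAdj E τ (shiftOn τ b C) :=
  ⟨C, hC, fun e _ ↦ by by_cases heC : e ∈ C <;> simp [shiftOn, heC, hb]⟩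

theorem IsMHom.mWalk_shiftOn (hb : addOrderOf b = 2) (hDE : D ⊆ E) (hτ : IsMHom E F τ)
    (hσ : IsMHom E F (shiftOn τ b D)) : MWalk E F τ (shiftOn τ b D) := by
  induction D using Finset.strongInduction generalizing τ with
  | H D ih =>
    rcases D.eq_empty_or_nonempty with rfl | hD
    · rw [shiftOn_empty]
      exact Relation.ReflTransGen.refl
    obtain ⟨C, hCD, hC⟩ := (hτ.isCocycle_of_shiftOn hb hDE hσ).exists_isCocircuit_subset hD
    have hb0 : b ≠ 0 := by
      rintro rfl
      simp at hb
    have hρ : IsMHom E F (shiftOn τ b C) :=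
      hτ.shiftOn_of_isCocycle (hb ▸ addOrderOf_nsmul_eq_zero b) hC.isCocycle fun e he ↦
        shiftOn_of_mem (τ := τ) (hCD he) ▸ hσ.1 e (hDE (hCD he))
    have hstep : MStep E F τ (shiftOn τ b C) := ⟨hτ, hρ, .inr (hC.mAdj_shiftOn hb0)⟩
    rw [← shiftOn_shiftOn_sdiff hCD] at hσ ⊢
    exact .head hstep
      (ih (D \ C) (Finset.sdiff_ssubset hCD hC.nonempty) (Finset.sdiff_subset.trans hDE) hρ hσ)

theorem IsMHom.mWalk_of_eqOn (hτ : IsMHom E F τ) (h : ∀ e ∈ E, τ' e = τ e) : MWalk E F τ τ' :=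
  .single ⟨hτ, hτ.congr h, .inl fun e he ↦ (h e he).symm⟩

theorem IsMHom.mWalk_of_eq_or_eq_add (hb : 2 • b = 0) (hτ : IsMHom E F τ) (hτ' : IsMHom E F τ')
    (h : ∀ e ∈ E, τ' e = τ e ∨ τ' e = τ e + b) : MWalk E F τ τ' := by
  classical
  rcases eq_or_ne b 0 with rfl | hb0
  · exact hτ.mWalk_of_eqOn fun e he ↦ by simpa using h e he
  let D := E.filter fun e ↦ τ' e ≠ τ e
  have hshift : ∀ e ∈ E, τ' e = shiftOn τ b D e := by
    intro e he
    by_cases hne : τ' e = τ e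
    · rw [shiftOn_of_notMem (by simp [D, hne]), hne]
    · rw [shiftOn_of_mem (by simp [D, he, hne])]
      exact (h e he).resolve_left hne
  have hσ : IsMHom E F (shiftOn τ b D) := hτ'.congr fun e he ↦ (hshift e he).symm
  exact (hτ.mWalk_shiftOn (addOrderOf_eq_prime hb hb0) (Finset.filter_subset _ _) hσ).trans
    (hσ.mWalk_of_eqOn hshift)

end Recolouring

section GraphicMatroid

theorem exists_linearMap_single_eq {V K Q : Type*} [DecidableEq V] [DivisionRing K]
    [AddCommGroup Q] [Module K Q] (φ : V → Q) :
    ∃ f : (V → K) →ₗ[K] Q, ∀ u, f (Pi.single u 1) = φ u := by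
  obtain ⟨g, hg⟩ := (Finsupp.lcoeFun (α := V) (M := K) (R := K)).exists_leftInverse_of_injective
    (LinearMap.ker_eq_bot.2 DFunLike.coe_injective)
  refine ⟨Finsupp.linearCombination K φ ∘ₗ g, fun u ↦ ?_⟩
  have hgu : g (Pi.single u 1) = Finsupp.single u 1 := by
    simpa [Finsupp.single_eq_pi_single] using LinearMap.congr_fun hg (Finsupp.single u 1)
  simp [hgu]

theorem add_eq_or_eq_add_of_eq_or_eq_add {Q : Type*} [AddCommGroup Q] [Module (ZMod 2) Q]
    {x x' y y' b : Q} (hx : x' = x ∨ x' = x + b) (hy : y' = y ∨ y' = y + b) :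
    x' + y' = x + y ∨ x' + y' = x + y + b := by
  rcases hx with rfl | rfl <;> rcases hy with rfl | rfl
  · exact .inl rfl
  · exact .inr (add_assoc _ _ _).symm
  · exact .inr (add_right_comm _ _ _)
  · exact .inl (by rw [add_add_add_comm, ZModModule.add_self, add_zero])

variable {V Q : Type*} [DecidableEq V] [AddCommGroup Q] [Module (ZMod 2) Q] {G : SimpleGraph V}
  {F : Finset Q} {EG : Finset (V → ZMod 2)} {φ ψ : V → Q} {τφ τψ : (V → ZMod 2) → Q} {b : Q}

theorem isMHom_of_forall_adj (hEG : ∀ x ∈ EG, ∃ u v, G.Adj u v ∧ x = ind u + ind v)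
    (hφ : ∀ u v, G.Adj u v → φ u + φ v ∈ F)
    (hτφ : ∀ u v, G.Adj u v → τφ (ind u + ind v) = φ u + φ v) : IsMHom EG F τφ := by
  obtain ⟨f, hf⟩ := exists_linearMap_single_eq (K := ZMod 2) φ
  have hf_edge : ∀ u v, f (ind u + ind v) = φ u + φ v := fun u v ↦ by
    rw [map_add, ind, ind, hf, hf]
  refine (isMHom_addMonoidHom f.toAddMonoidHom fun e he ↦ ?_).congr fun e he ↦ ?_
  · obtain ⟨u, v, huv, rfl⟩ := hEG e he
    exact (hf_edge u v).symm ▸ hφ u v huv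
  · obtain ⟨u, v, huv, rfl⟩ := hEG e he
    exact (hτφ u v huv).trans (hf_edge u v).symm

theorem stmt13_general [DecidableEq (V → ZMod 2)]
    (hEG : ∀ x, x ∈ EG ↔ ∃ u v, G.Adj u v ∧ x = ind u + ind v)
    (hφ : ∀ u v, G.Adj u v → φ u + φ v ∈ F) (hψ : ∀ u v, G.Adj u v → ψ u + ψ v ∈ F)
    (hψφ : ∀ u, ψ u = φ u ∨ ψ u = φ u + b)
    (hτφ : ∀ u v, G.Adj u v → τφ (ind u + ind v) = φ u + φ v)
    (hτψ : ∀ u v, G.Adj u v → τψ (ind u + ind v) = ψ u + ψ v) :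
    MWalk EG F τφ τψ := by
  have hedge := fun x ↦ (hEG x).1
  refine (isMHom_of_forall_adj hedge hφ hτφ).mWalk_of_eq_or_eq_add
    (ZModModule.char_nsmul_eq_zero 2 b) (isMHom_of_forall_adj hedge hψ hτψ) fun e he ↦ ?_
  obtain ⟨u, v, huv, rfl⟩ := hedge e he
  rw [hτφ u v huv, hτψ u v huv]
  exact add_eq_or_eq_add_of_eq_or_eq_add (hψφ u) (hψφ v)

end GraphicMatroid

theorem stmt13 {V : Type*} [Fintype V] [DecidableEq V] (m : ℕ)
    (G : SimpleGraph V) (F : Finset (Fin m → ZMod 2)) (hF : ∀ f ∈ F, f ≠ 0)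
    (EG : Finset (V → ZMod 2))
    (hEG : ∀ x, x ∈ EG ↔ ∃ u v, G.Adj u v ∧ x = ind u + ind v)
    (φ ψ : G →g decisionGraph F) (hK : KempeAdj φ ψ)
    (τφ τψ : (V → ZMod 2) → (Fin m → ZMod 2))
    (hτφ : ∀ u v, G.Adj u v → τφ (ind u + ind v) = φ u + φ v)
    (hτψ : ∀ u v, G.Adj u v → τψ (ind u + ind v) = ψ u + ψ v) :
    MWalk EG F τφ τψ := by
  obtain ⟨b, -, U, -, hU, hU'⟩ := hK
  exact stmt13_general hEG (fun _ _ h ↦ (φ.map_adj h).1) (fun _ _ h ↦ (ψ.map_adj h).1)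
    (fun u ↦ (em (u ∈ U)).symm.imp (hU' u) (hU u)) hτφ hτψ
end
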